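/- If the sublinear operators E_μ and E_υ are both continuous from above on 𝒳, then Problem 2.1 admits an optimal solution: there exists X_α ∈ 𝒳_α with E_ῡ[X_α] = sup_{X ∈ 𝒳_α} E_ῡ[X]. -/

import Mathlib

open MeasureTheory Filter Topology
open scoped ENNReal

/-- `X` belongs to the space `𝒳` of bounded measurable real-valued functions on `Ω`. -/
def MemX {Ω : Type*} [MeasurableSpace Ω] (X : Ω → ℝ) : Prop :=
  Measurable X ∧ ∃ M : ℝ, ∀ ω, |X ω| ≤ M

/-- A sublinear operator on `𝒳`: monotone, constant preserving, subadditive and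
positively homogeneous. -/
def IsSublinearOp {Ω : Type*} [MeasurableSpace Ω] (ρ : (Ω → ℝ) → ℝ) : Prop :=
  (∀ X Y : Ω → ℝ, MemX X → MemX Y → (∀ ω, Y ω ≤ X ω) → ρ Y ≤ ρ X) ∧
  (∀ c : ℝ, ρ (fun _ => c) = c) ∧
  (∀ X Y : Ω → ℝ, MemX X → MemX Y → ρ (X + Y) ≤ ρ X + ρ Y) ∧
  (∀ c : ℝ, 0 ≤ c → ∀ X : Ω → ℝ, MemX X → ρ (c • X) = c * ρ X)

/-- A linear functional on `𝒳`. -/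
def IsLinearOp {Ω : Type*} [MeasurableSpace Ω] (L : (Ω → ℝ) → ℝ) : Prop :=
  (∀ X Y : Ω → ℝ, MemX X → MemX Y → L (X + Y) = L X + L Y) ∧
  (∀ (c : ℝ) (X : Ω → ℝ), MemX X → L (c • X) = c * L X)

/-- `L` is dominated by `ρ` on `𝒳`. -/
def Dominated {Ω : Type*} [MeasurableSpace Ω] (L ρ : (Ω → ℝ) → ℝ) : Prop :=
  ∀ X : Ω → ℝ, MemX X → L X ≤ ρ X

/-- The conjugate operator `E_ῡ[X] := -E_υ[-X]`. -/
def conjOp {Ω : Type*} (ρ : (Ω → ℝ) → ℝ) : (Ω → ℝ) → ℝ := fun X => -ρ (-X)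

/-- The set `𝒳_α` of test functions at significance level `α`. -/
def testSet {Ω : Type*} [MeasurableSpace Ω] (Emu : (Ω → ℝ) → ℝ) (α : ℝ) : Set (Ω → ℝ) :=
  {X | MemX X ∧ (∀ ω, 0 ≤ X ω ∧ X ω ≤ 1) ∧ Emu X ≤ α}

/-- A sublinear operator `ρ` on `𝒳` is continuous from above: `ρ(X_n) ↓ 0` whenever
`X_n ∈ 𝒳` and `X_n ↓ 0` pointwise. -/
def ContFromAbove {Ω : Type*} [MeasurableSpace Ω] (ρ : (Ω → ℝ) → ℝ) : Prop :=
  ∀ X : ℕ → Ω → ℝ, (∀ n, MemX (X n)) → (∀ ω, Antitone fun n => X n ω) →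
    (∀ ω, Tendsto (fun n => X n ω) atTop (𝓝 0)) →
    Tendsto (fun n => ρ (X n)) atTop (𝓝 0)

/-!
Since `E_μ` and `E_υ` are continuous from above, every linear functional dominated by one of them
induces a measure, and for pairwise disjoint `E_n` and dominated measures `μ_n` one has
`μ_n(E_n) → 0`. By a Halmos–Savage exhaustion such a family is dominated by one finite measure `ν`.
By Hahn–Banach, `ρ(1_A)` is attained as `μ(A)` for some dominated `μ`, so the `ν`-null sets are
negligible for both operators. Continuity from above then upgrades to a bounded convergence theorem:
both operators are continuous along uniformly bounded sequences converging `ν`-a.e.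

On the other hand, the closures of a decreasing sequence of nonempty convex subsets of an order
interval of `L²(ν)` have a common point. Applied to the superlevel sets of the concave objective
along a maximising sequence, this yields tests converging `ν`-a.e., whose limit is optimal.
-/

section NestedConvex

lemma cauchySeq_of_norm_sq_add_norm_sub_sq_le {H : Type*} [SeminormedAddCommGroup H]
    {v : ℕ → H} (hbdd : Bornology.IsBounded (Set.range v))
    (hv : ∀ n m, n ≤ m → ‖v n‖ ^ 2 + ‖v m - v n‖ ^ 2 ≤ ‖v m‖ ^ 2) : CauchySeq v := by
  have hmono : Monotone fun n => ‖v n‖ ^ 2 := fun n m hnm =>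
    (le_add_of_nonneg_right (sq_nonneg _)).trans (hv n m hnm)
  obtain ⟨R, hR⟩ := hbdd.exists_norm_le
  have hnorm : CauchySeq fun n => ‖v n‖ ^ 2 := by
    refine (tendsto_atTop_ciSup hmono ⟨R ^ 2, ?_⟩).cauchySeq
    rintro _ ⟨n, rfl⟩
    exact pow_le_pow_left₀ (norm_nonneg _) (hR _ ⟨n, rfl⟩) 2
  refine Metric.cauchySeq_iff'.2 fun ε hε => ?_
  obtain ⟨N, hN⟩ := Metric.cauchySeq_iff'.1 hnorm (ε ^ 2) (by positivity)
  refine ⟨N, fun n hn => ?_⟩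
  have hdiff : ‖v n‖ ^ 2 - ‖v N‖ ^ 2 < ε ^ 2 := (le_abs_self _).trans_lt (hN n hn)
  rw [dist_eq_norm]
  exact lt_of_pow_lt_pow_left₀ 2 hε.le (by linarith [hv N n hn])

variable {H : Type*} [NormedAddCommGroup H] [InnerProductSpace ℝ H]

lemma exists_forall_norm_sq_add_norm_sub_sq_le {C : Set H} (hne : C.Nonempty) (hC : IsComplete C)
    (hconv : Convex ℝ C) : ∃ v ∈ C, ∀ w ∈ C, ‖v‖ ^ 2 + ‖w - v‖ ^ 2 ≤ ‖w‖ ^ 2 := by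
  obtain ⟨v, hv, hvmin⟩ := exists_norm_eq_iInf_of_complete_convex hne hC hconv 0
  refine ⟨v, hv, fun w hw => ?_⟩
  have hinner : inner ℝ (0 - v) (w - v) ≤ 0 :=
    (norm_eq_iInf_iff_real_inner_le_zero hconv hv).1 hvmin w hw
  rw [zero_sub, inner_neg_left] at hinner
  have hexpand := norm_add_sq_real v (w - v)
  rw [add_sub_cancel] at hexpand
  linarith

theorem nonempty_iInter_closure_of_antitone_convex [CompleteSpace H] {C : ℕ → Set H}
    (hanti : Antitone C) (hconv : ∀ n, Convex ℝ (C n)) (hne : ∀ n, (C n).Nonempty)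
    (hbdd : Bornology.IsBounded (C 0)) : (⋂ n, closure (C n)).Nonempty := by
  choose v hv hvmin using fun n => exists_forall_norm_sq_add_norm_sub_sq_le (hne n).closure
    isClosed_closure.isComplete (hconv n).closure
  have hmem : ∀ n m, n ≤ m → v m ∈ closure (C n) := fun n m hnm => closure_mono (hanti hnm) (hv m)
  have hcauchy : CauchySeq v := by
    refine cauchySeq_of_norm_sq_add_norm_sub_sq_le (hbdd.closure.subset ?_)
      fun n m hnm => hvmin n (v m) (hmem n m hnm)
    rintro _ ⟨m, rfl⟩
    exact hmem 0 m m.zero_le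
  obtain ⟨q, hq⟩ := cauchySeq_tendsto_of_complete hcauchy
  exact ⟨q, Set.mem_iInter.2 fun n => isClosed_closure.mem_of_tendsto hq
    ((eventually_ge_atTop n).mono (hmem n))⟩

end NestedConvex

section OrderInterval

variable {Ω : Type*} [MeasurableSpace Ω]

/-- The classes in `Lp` of the functions in `K`. Members of `K` that are not in `Lp` contribute
nothing. -/
def lpClasses (p : ℝ≥0∞) (ν : Measure Ω) (K : Set (Ω → ℝ)) : Set (Lp ℝ p ν) :=
  {h | ∃ X ∈ K, h =ᵐ[ν] X}

variable {p : ℝ≥0∞} {ν : Measure Ω} {K : Set (Ω → ℝ)} {f g : Ω → ℝ}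

lemma lpClasses_mono : Monotone (lpClasses p ν) := fun _ _ hKL _ ⟨X, hX, hh⟩ => ⟨X, hKL hX, hh⟩

lemma convex_lpClasses (hK : Convex ℝ K) : Convex ℝ (lpClasses p ν K) := by
  rintro h ⟨X, hX, hhX⟩ h' ⟨Y, hY, hhY⟩ a b ha hb hab
  exact ⟨a • X + b • Y, hK hX hY ha hb hab, (Lp.coeFn_add _ _).trans
    (((Lp.coeFn_smul a h).trans (hhX.const_smul a)).add
      ((Lp.coeFn_smul b h').trans (hhY.const_smul b)))⟩

lemma memLp_sup_abs (hf : MemLp f p ν) (hg : MemLp g p ν) : MemLp (|f| ⊔ |g|) p ν :=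
  hf.abs.sup hg.abs

lemma nonempty_lpClasses (hf : MemLp f p ν) (hg : MemLp g p ν) (hne : K.Nonempty)
    (hmeas : ∀ X ∈ K, Measurable X) (hK : K ⊆ Set.Icc f g) : (lpClasses p ν K).Nonempty := by
  obtain ⟨X, hX⟩ := hne
  have hXp : MemLp X p ν := (memLp_sup_abs hf hg).mono' (hmeas X hX).aestronglyMeasurable
    (.of_forall fun ω => abs_le_max_abs_abs ((hK hX).1 ω) ((hK hX).2 ω))
  exact ⟨hXp.toLp X, X, hX, hXp.coeFn_toLp⟩

lemma isBounded_lpClasses [Fact (1 ≤ p)] (hf : MemLp f p ν) (hg : MemLp g p ν)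
    (hK : K ⊆ Set.Icc f g) : Bornology.IsBounded (lpClasses p ν K) := by
  refine isBounded_iff_forall_norm_le.2 ⟨‖(memLp_sup_abs hf hg).toLp _‖, ?_⟩
  rintro h ⟨X, hX, hhX⟩
  refine Lp.norm_le_norm_of_ae_le ?_
  filter_upwards [hhX, (memLp_sup_abs hf hg).coeFn_toLp] with ω hω hbound
  rw [hω, hbound]
  exact (abs_le_max_abs_abs ((hK hX).1 ω) ((hK hX).2 ω)).trans (le_abs_self _)

lemma exists_measurable_limit_mem_Icc {Y : ℕ → Ω → ℝ} (hmeas : ∀ n, Measurable (Y n))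
    (hY : ∀ n, Y n ∈ Set.Icc f g)
    (hlim : ∀ᵐ ω ∂ν, ∃ l, Tendsto (fun n => Y n ω) atTop (𝓝 l)) :
    ∃ Z ∈ Set.Icc f g, Measurable Z ∧ ∀ᵐ ω ∂ν, Tendsto (fun n => Y n ω) atTop (𝓝 (Z ω)) := by
  have hbelow : ∀ ω, IsBoundedUnder (· ≥ ·) atTop fun n => Y n ω := fun ω =>
    isBoundedUnder_of ⟨f ω, fun n => (hY n).1 ω⟩
  have habove : ∀ ω, IsBoundedUnder (· ≤ ·) atTop fun n => Y n ω := fun ω =>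
    isBoundedUnder_of ⟨g ω, fun n => (hY n).2 ω⟩
  refine ⟨fun ω => limsup (fun n => Y n ω) atTop, ⟨fun ω => ?_, fun ω => ?_⟩, .limsup hmeas, ?_⟩
  · exact le_limsup_of_frequently_le (.of_forall fun n => (hY n).1 ω) (habove ω)
  · exact limsup_le_of_le (hbelow ω).isCoboundedUnder_flip (.of_forall fun n => (hY n).2 ω)
  · filter_upwards [hlim] with ω ⟨l, hl⟩
    rwa [hl.limsup_eq]

theorem exists_tendsto_ae_of_antitone_convex (hf : MemLp f 2 ν) (hg : MemLp g 2 ν)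
    {K : ℕ → Set (Ω → ℝ)} (hanti : Antitone K) (hconv : ∀ n, Convex ℝ (K n))
    (hne : ∀ n, (K n).Nonempty) (hmeas : ∀ X ∈ K 0, Measurable X) (hK : K 0 ⊆ Set.Icc f g) :
    ∃ Y : ℕ → Ω → ℝ, (∀ n, Y n ∈ K n) ∧ ∃ Z ∈ Set.Icc f g, Measurable Z ∧
      ∀ᵐ ω ∂ν, Tendsto (fun n => Y n ω) atTop (𝓝 (Z ω)) := by
  have hK0 : ∀ n, K n ⊆ K 0 := fun n => hanti n.zero_le
  obtain ⟨q, hq⟩ := nonempty_iInter_closure_of_antitone_convex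
    (lpClasses_mono.comp_antitone hanti) (fun n => convex_lpClasses (p := 2) (ν := ν) (hconv n))
    (fun n => nonempty_lpClasses hf hg (hne n) (fun X hX => hmeas X (hK0 n hX))
      ((hK0 n).trans hK)) (isBounded_lpClasses hf hg hK)
  have hclose : ∀ n : ℕ, ∃ h ∈ lpClasses 2 ν (K n), dist q h < 1 / ((n : ℝ) + 1) := fun n =>
    Metric.mem_closure_iff.1 (Set.mem_iInter.1 hq n) _ Nat.one_div_pos_of_nat
  choose h hh hdist using hclose
  choose X hX hhX using hh
  have hlimLp : Tendsto h atTop (𝓝 q) := tendsto_iff_dist_tendsto_zero.2 <|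
    squeeze_zero (fun _ => dist_nonneg) (fun n => (dist_comm _ _).trans_le (hdist n).le)
      tendsto_one_div_add_atTop_nhds_zero_nat
  obtain ⟨φ, hφ, hae⟩ := (tendstoInMeasure_of_tendsto_Lp hlimLp).exists_seq_tendsto_ae
  refine ⟨fun n => X (φ n), fun n => hanti (hφ.id_le n) (hX _), ?_⟩
  refine exists_measurable_limit_mem_Icc (fun n => hmeas _ (hK0 _ (hX _)))
    (fun n => hK (hK0 _ (hX _))) ?_
  filter_upwards [hae, ae_all_iff.2 hhX] with ω hω hXω
  exact ⟨q ω, by simpa only [hXω] using hω⟩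

theorem exists_isMaxOn_of_quasiconcaveOn (hf : MemLp f 2 ν) (hg : MemLp g 2 ν)
    {S : Set (Ω → ℝ)} (hne : S.Nonempty) (hmeas : ∀ X ∈ S, Measurable X) (hS : S ⊆ Set.Icc f g)
    {U : (Ω → ℝ) → ℝ} (hU : QuasiconcaveOn ℝ S U)
    (hclosed : ∀ (c : ℝ) (Y : ℕ → Ω → ℝ) (Z : Ω → ℝ), (∀ n, Y n ∈ S ∧ c ≤ U (Y n)) →
      Measurable Z → Z ∈ Set.Icc f g → (∀ᵐ ω ∂ν, Tendsto (fun n => Y n ω) atTop (𝓝 (Z ω))) →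
      Z ∈ S ∧ c ≤ U Z) :
    ∃ X ∈ S, IsMaxOn U S X := by
  -- The supremum is taken in `EReal`, where it exists without assuming that `U` is bounded.
  let V : (Ω → ℝ) → EReal := fun X => U X
  obtain ⟨u, humono, -, hulim, hu⟩ :=
    (isLUB_sSup (V '' S)).exists_seq_monotone_tendsto (hne.image V)
  choose X hX hXu using hu
  have hUmono : Monotone fun n => U (X n) := fun n m hnm => by
    simpa only [← hXu, V, EReal.coe_le_coe_iff] using humono hnm
  obtain ⟨Y, hY, Z, hZ, hZmeas, hYZ⟩ := exists_tendsto_ae_of_antitone_convex hf hg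
    (K := fun n => {W ∈ S | U (X n) ≤ U W}) (fun n m hnm W hW => ⟨hW.1, (hUmono hnm).trans hW.2⟩)
    (fun n => hU _) (fun n => ⟨X n, hX n, le_rfl⟩) (fun W hW => hmeas W hW.1) (fun W hW => hS hW.1)
  have hZK : ∀ m, Z ∈ S ∧ U (X m) ≤ U Z := fun m =>
    hclosed _ (fun n => Y (n + m)) Z
      (fun n => ⟨(hY _).1, (hUmono (Nat.le_add_left m n)).trans (hY _).2⟩) hZmeas hZ
      (hYZ.mono fun ω hω => (tendsto_add_atTop_iff_nat m).2 hω)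
  refine ⟨Z, (hZK 0).1, fun W hW => EReal.coe_le_coe_iff.1 ?_⟩
  calc V W ≤ sSup (V '' S) := le_sSup ⟨W, hW, rfl⟩
    _ ≤ V Z := le_of_tendsto' hulim fun n => by
      rw [← hXu]
      exact EReal.coe_le_coe_iff.2 (hZK n).2

end OrderInterval

section HalmosSavage

variable {Ω : Type*} [MeasurableSpace Ω]

/-- Uniformly exhaustive families of measures: no sequence of disjoint sets carries mass bounded
away from zero, even if the measure varies along the sequence. -/
def UniformlyExhaustive (M : Set (Measure Ω)) : Prop :=
  ∀ (μ : ℕ → Measure Ω) (E : ℕ → Set Ω), (∀ n, μ n ∈ M) → (∀ n, MeasurableSet (E n)) →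
    Pairwise (Function.onFun Disjoint E) → Tendsto (fun n => μ n (E n)) atTop (𝓝 0)

variable {M : Set (Measure Ω)}

lemma UniformlyExhaustive.exists_finset_measure_lt (hM : UniformlyExhaustive M) {ε : ℝ≥0∞}
    (hε : 0 < ε) : ∃ s : Finset (Measure Ω), ↑s ⊆ M ∧ ∀ μ ∈ M, ∀ A, MeasurableSet A →
      (∀ κ ∈ s, κ A = 0) → μ A < ε := by
  classical
  by_contra! hcon
  obtain ⟨F, hF, hnull⟩ := exists_seq_of_forall_finset_exists
    (fun x : Measure Ω × Set Ω => x.1 ∈ M ∧ MeasurableSet x.2 ∧ ε ≤ x.1 x.2)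
    (fun x y => x.1 y.2 = 0) fun s hs => by
      obtain ⟨μ, hμ, A, hA, hAnull, hAε⟩ := hcon (s.image Prod.fst) (by
        rw [Finset.coe_image, Set.image_subset_iff]
        exact fun x hx => (hs x hx).1)
      exact ⟨(μ, A), ⟨hμ, hA, hAε⟩, fun x hx => hAnull _ (Finset.mem_image_of_mem _ hx)⟩
  let μ n := (F n).1
  let A n := (F n).2
  -- Later sets are null for earlier measures, so removing them makes the sequence disjoint.
  let E n := A n \ ⋃ k > n, A k
  have hE : ∀ n, MeasurableSet (E n) := fun n =>
    (hF n).2.1.diff (.biUnion (Set.to_countable _) fun k _ => (hF k).2.1)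
  have hdisj : Pairwise (Function.onFun Disjoint E) :=
    (pairwise_disjoint_on E).2 fun m n hmn =>
      Set.disjoint_left.2 fun ω hm hn => hm.2 (Set.mem_biUnion hmn hn.1)
  have hmass : ∀ n, ε ≤ μ n (E n) := fun n => by
    have htail : μ n (⋃ k > n, A k) = 0 :=
      (measure_biUnion_null_iff (Set.to_countable _)).2 fun k hk => hnull n k hk
    rw [measure_sdiff_null htail]
    exact (hF n).2.2
  exact hε.not_ge (ge_of_tendsto' (hM μ E (fun n => (hF n).1) hE hdisj) hmass)

theorem UniformlyExhaustive.exists_isFiniteMeasure_forall_absolutelyContinuous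
    (hM : UniformlyExhaustive M) (hfin : ∀ μ ∈ M, SFinite μ) :
    ∃ ν : Measure Ω, IsFiniteMeasure ν ∧ ∀ μ ∈ M, μ ≪ ν := by
  choose s hsM hs using fun n : ℕ =>
    hM.exists_finset_measure_lt (ENNReal.inv_pos.2 (ENNReal.natCast_ne_top n))
  have hsfin : ∀ n (κ : s n), SFinite κ.1 := fun n κ => hfin _ (hsM n κ.2)
  obtain ⟨ν, hν, hac, -⟩ := exists_isFiniteMeasure_absolutelyContinuous
    (Measure.sum fun n => Measure.sum fun κ : s n => κ.1)
  refine ⟨ν, hν, fun μ hμ => .mk fun A hA hAν => ?_⟩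
  have hnull : ∀ n, ∀ κ ∈ s n, κ A = 0 := by
    simpa [Measure.sum_apply _ hA] using hac hAν
  exact le_zero_iff.1 (ge_of_tendsto' ENNReal.tendsto_inv_nat_nhds_zero
    fun n => (hs n μ hμ A hA (hnull n)).le)

end HalmosSavage

section BoundedMeasurable

variable {Ω : Type*} [MeasurableSpace Ω] {X Y : Ω → ℝ}

lemma MemX.add (hX : MemX X) (hY : MemX Y) : MemX (X + Y) := by
  obtain ⟨hX, M, hM⟩ := hX
  obtain ⟨hY, N, hN⟩ := hY
  exact ⟨hX.add hY, M + N, fun ω => (abs_add_le _ _).trans (add_le_add (hM ω) (hN ω))⟩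

lemma MemX.const_smul (hX : MemX X) (c : ℝ) : MemX (c • X) := by
  obtain ⟨hX, M, hM⟩ := hX
  refine ⟨hX.const_smul c, |c| * M, fun ω => ?_⟩
  rw [Pi.smul_apply, smul_eq_mul, abs_mul]
  exact mul_le_mul_of_nonneg_left (hM ω) (abs_nonneg c)

lemma memX_const (c : ℝ) : MemX fun _ : Ω => c := ⟨measurable_const, |c|, fun _ => le_rfl⟩

variable (Ω) in
/-- The space `𝒳` of bounded measurable functions, as a subspace of `Ω → ℝ`. -/
def boundedMeasurable : Submodule ℝ (Ω → ℝ) where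
  carrier := {X | MemX X}
  add_mem' := MemX.add
  zero_mem' := memX_const 0
  smul_mem' c _ hX := hX.const_smul c

lemma MemX.neg (hX : MemX X) : MemX (-X) := (boundedMeasurable Ω).neg_mem hX

lemma MemX.sub (hX : MemX X) (hY : MemX Y) : MemX (X - Y) := (boundedMeasurable Ω).sub_mem hX hY

lemma MemX.abs (hX : MemX X) : MemX |X| :=
  ⟨hX.1.norm, hX.2.imp fun _ hM ω => (abs_abs (X ω)).trans_le (hM ω)⟩

lemma MemX.indicator (hX : MemX X) {A : Set Ω} (hA : MeasurableSet A) : MemX (A.indicator X) :=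
  ⟨hX.1.indicator hA, hX.2.imp fun _ hM ω => (norm_indicator_le_norm_self X ω).trans (hM ω)⟩

lemma memX_indicator_one {A : Set Ω} (hA : MeasurableSet A) : MemX (A.indicator 1) :=
  (memX_const 1).indicator hA

lemma memX_of_mem_Icc (hXm : Measurable X) {a b : ℝ} (hX : ∀ ω, X ω ∈ Set.Icc a b) : MemX X :=
  ⟨hXm, max |a| |b|, fun ω => abs_le_max_abs_abs (hX ω).1 (hX ω).2⟩

end BoundedMeasurable

section SublinearOperator

variable {Ω : Type*} [MeasurableSpace Ω] {ρ : (Ω → ℝ) → ℝ} {X Y : Ω → ℝ}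

lemma IsSublinearOp.map_zero (hρ : IsSublinearOp ρ) : ρ 0 = 0 := hρ.2.1 0

lemma IsSublinearOp.mono (hρ : IsSublinearOp ρ) (hX : MemX X) (hY : MemX Y) (hXY : X ≤ Y) :
    ρ X ≤ ρ Y :=
  hρ.1 Y X hY hX hXY

lemma IsSublinearOp.nonneg (hρ : IsSublinearOp ρ) (hX : MemX X) (hX0 : 0 ≤ X) : 0 ≤ ρ X :=
  hρ.map_zero.ge.trans (hρ.mono (memX_const 0) hX hX0)

lemma IsSublinearOp.abs_sub_le (hρ : IsSublinearOp ρ) (hX : MemX X) (hY : MemX Y) :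
    |ρ X - ρ Y| ≤ ρ |X - Y| := by
  have hsub : ∀ {X Y}, MemX X → MemX Y → ρ X - ρ Y ≤ ρ |X - Y| := fun {X Y} hX hY => by
    have hadd := hρ.2.2.1 (X - Y) Y (hX.sub hY) hY
    rw [sub_add_cancel] at hadd
    linarith [hρ.mono (hX.sub hY) (hX.sub hY).abs (le_abs_self _)]
  exact abs_sub_le_iff.2 ⟨hsub hX hY, abs_sub_comm X Y ▸ hsub hY hX⟩

lemma IsSublinearOp.convexOn (hρ : IsSublinearOp ρ) : ConvexOn ℝ {X | MemX X} ρ := by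
  refine ⟨(boundedMeasurable Ω).convex, fun X hX Y hY a b ha hb _ => ?_⟩
  rw [smul_eq_mul, smul_eq_mul, ← hρ.2.2.2 a ha X hX, ← hρ.2.2.2 b hb Y hY]
  exact hρ.2.2.1 _ _ (hX.const_smul a) (hY.const_smul b)

lemma IsSublinearOp.concaveOn_conjOp (hρ : IsSublinearOp ρ) :
    ConcaveOn ℝ {X | MemX X} (conjOp ρ) := by
  refine ⟨(boundedMeasurable Ω).convex, fun X hX Y hY a b ha hb hab => ?_⟩
  have hconv := hρ.convexOn.2 hX.neg hY.neg ha hb hab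
  rw [smul_neg, smul_neg, ← neg_add] at hconv
  simp only [conjOp, smul_eq_mul] at hconv ⊢
  linarith

lemma IsSublinearOp.convex_testSet (hρ : IsSublinearOp ρ) (α : ℝ) : Convex ℝ (testSet ρ α) := by
  have hinter : testSet ρ α = {X ∈ {X | MemX X} | ρ X ≤ α} ∩ Set.Icc 0 1 := by
    ext X
    simp only [testSet, Set.mem_ofPred_eq, Set.mem_inter_iff, Set.mem_Icc, Pi.le_def, forall_and,
      Pi.zero_apply, Pi.one_apply]
    tauto
  rw [hinter]
  exact (hρ.convexOn.convex_le α).inter (convex_Icc 0 1)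

end SublinearOperator

section Domination

theorem exists_linearMap_eq_forall_le_of_sublinear {E : Type*} [AddCommGroup E] [Module ℝ E]
    {N : E → ℝ} (hsmul : ∀ c : ℝ, 0 < c → ∀ x, N (c • x) = c * N x)
    (hadd : ∀ x y, N (x + y) ≤ N x + N y) (x : E) :
    ∃ g : E →ₗ[ℝ] ℝ, g x = N x ∧ ∀ y, g y ≤ N y := by
  have hzero : N 0 = 0 := by
    have h := hsmul 2 two_pos 0
    rw [smul_zero] at h
    linarith
  have hspan : ∀ c : ℝ, c * N x ≤ N (c • x) := fun c => by
    rcases lt_trichotomy c 0 with hc | rfl | hc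
    · have h := hadd (c • x) ((-c) • x)
      rw [← add_smul, add_neg_cancel, zero_smul, hzero, hsmul (-c) (neg_pos.2 hc)] at h
      linarith
    · rw [zero_smul, zero_mul, hzero]
    · exact (hsmul c hc x).ge
  have hwell : ∀ c : ℝ, c • x = 0 → (RingHom.id ℝ) c • N x = 0 := fun c hc => by
    rcases smul_eq_zero.1 hc with rfl | rfl
    · exact zero_smul ℝ _
    · rw [hzero, smul_zero]
  obtain ⟨g, hgx, hg⟩ := exists_extension_of_le_sublinear
    (LinearPMap.mkSpanSingleton' x (N x) hwell) N hsmul hadd (by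
      rintro ⟨y, hy⟩
      obtain ⟨c, rfl⟩ := Submodule.mem_span_singleton.1 hy
      rw [LinearPMap.mkSpanSingleton'_apply]
      exact hspan c)
  exact ⟨g, (hgx ⟨x, Submodule.mem_span_singleton_self x⟩).trans
    (LinearPMap.mkSpanSingleton'_apply_self x (N x) hwell _), hg⟩

variable {Ω : Type*} [MeasurableSpace Ω] {L ρ : (Ω → ℝ) → ℝ} {X : Ω → ℝ}

theorem IsSublinearOp.exists_isLinearOp_dominated_eq (hρ : IsSublinearOp ρ) (hX : MemX X) :
    ∃ L, IsLinearOp L ∧ Dominated L ρ ∧ L X = ρ X := by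
  obtain ⟨g, hgX, hg⟩ := exists_linearMap_eq_forall_le_of_sublinear
    (N := fun Y : boundedMeasurable Ω => ρ Y) (fun c hc Y => hρ.2.2.2 c hc.le Y Y.2)
    (fun Y Z => hρ.2.2.1 Y Z Y.2 Z.2) ⟨X, hX⟩
  obtain ⟨L, hL⟩ := g.exists_extend
  have hLg : ∀ Y : boundedMeasurable Ω, L Y = g Y := LinearMap.congr_fun hL
  exact ⟨L, ⟨fun Y Z _ _ => L.map_add Y Z, fun c Y _ => L.map_smul c Y⟩,
    fun Y hY => (hLg ⟨Y, hY⟩).trans_le (hg ⟨Y, hY⟩), (hLg ⟨X, hX⟩).trans hgX⟩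

lemma Dominated.nonneg (hL : IsLinearOp L) (hLρ : Dominated L ρ) (hρ : IsSublinearOp ρ)
    (hX : MemX X) (hX0 : 0 ≤ X) : 0 ≤ L X := by
  have hneg : L (-X) = -L X := by
    rw [← neg_one_smul ℝ X, hL.2 _ X hX, neg_one_mul]
  have hle : ρ (-X) ≤ 0 := hρ.map_zero ▸ hρ.mono hX.neg (memX_const 0) (neg_nonpos.2 hX0)
  linarith [hLρ (-X) hX.neg]

lemma ContFromAbove.tendsto_indicator (hcont : ContFromAbove ρ) {A : ℕ → Set Ω}
    (hA : ∀ n, MeasurableSet (A n)) (hanti : Antitone A) (hempty : ⋂ n, A n = ∅) :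
    Tendsto (fun n => ρ ((A n).indicator 1)) atTop (𝓝 0) := by
  refine hcont _ (fun n => memX_indicator_one (hA n)) (fun ω m n hmn => ?_) fun ω => ?_
  · exact Set.indicator_le_indicator_of_subset (hanti hmn) (fun _ => zero_le_one) ω
  · have hlim := (hanti.tendsto_indicator A (1 : Ω → ℝ) ω).mono_right (pure_le_nhds _)
    rwa [hempty, Set.indicator_empty] at hlim

theorem Dominated.exists_measure (hL : IsLinearOp L) (hLρ : Dominated L ρ)
    (hρ : IsSublinearOp ρ) (hcont : ContFromAbove ρ) :
    ∃ μ : Measure Ω, ∀ A, MeasurableSet A → μ A = ENNReal.ofReal (L (A.indicator 1)) := by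
  have hL0 : L 0 = 0 := by simpa only [zero_smul, zero_mul] using hL.2 0 0 (memX_const 0)
  have hind : ∀ {A : Set Ω}, MeasurableSet A → 0 ≤ L (A.indicator 1) := fun hA =>
    hLρ.nonneg hL hρ (memX_indicator_one hA) (Set.indicator_nonneg fun _ _ => zero_le_one)
  have hring : IsSetRing {A : Set Ω | MeasurableSet A} := 
    ⟨.empty, fun _ _ => .union, fun _ _ => .diff⟩
  let m : AddContent ℝ≥0∞ {A : Set Ω | MeasurableSet A} := hring.addContent_of_union
    (fun A => ENNReal.ofReal (L (A.indicator 1)))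
    (by rw [Set.indicator_empty, ← Pi.zero_def, hL0, ENNReal.ofReal_zero])
    fun hA hB hAB => by
      rw [Set.indicator_union_of_disjoint hAB, ← ENNReal.ofReal_add (hind hA) (hind hB),
        ← hL.1 _ _ (memX_indicator_one hA) (memX_indicator_one hB)]
      rfl
  have htendsto : ∀ ⦃A : ℕ → Set Ω⦄, (∀ n, MeasurableSet (A n)) → Antitone A → ⋂ n, A n = ∅ →
      Tendsto (fun n => m (A n)) atTop (𝓝 0) := fun A hA hanti hempty => by
    rw [← ENNReal.ofReal_zero]
    exact ENNReal.tendsto_ofReal <| squeeze_zero (fun n => hind (hA n))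
      (fun n => hLρ _ (memX_indicator_one (hA n))) (hcont.tendsto_indicator hA hanti hempty)
  exact ⟨.ofMeasurable (fun A _ => m A) addContent_empty fun A hA hdisj =>
    addContent_iUnion_eq_sum_of_tendsto_zero hring m (fun _ _ => ENNReal.ofReal_ne_top) htendsto
      hA (.iUnion hA) hdisj, fun A hA => Measure.ofMeasurable_apply A hA⟩

end Domination

section Control

variable {Ω : Type*} [MeasurableSpace Ω] {ρ : (Ω → ℝ) → ℝ} {μ ν : Measure Ω} {C : ℝ}

/-- The measures lying below the set function `A ↦ ρ(1_A)`. If `ρ` is continuous from above, every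
linear functional dominated by `ρ` induces such a measure. -/
def dominatedMeasures (ρ : (Ω → ℝ) → ℝ) : Set (Measure Ω) :=
  {μ | ∀ A, MeasurableSet A → μ A ≤ ENNReal.ofReal (ρ (A.indicator 1))}

/-- Absolute continuity of a sublinear operator with respect to a measure: `ν`-null events are
negligible for `ρ`. -/
def ControlledBy (ρ : (Ω → ℝ) → ℝ) (ν : Measure Ω) : Prop :=
  ∀ A, MeasurableSet A → ν A = 0 → ρ (A.indicator 1) = 0

lemma isFiniteMeasure_of_mem_dominatedMeasures (hμ : μ ∈ dominatedMeasures ρ) :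
    IsFiniteMeasure μ :=
  ⟨(hμ _ .univ).trans_lt ENNReal.ofReal_lt_top⟩

lemma IsSublinearOp.exists_mem_dominatedMeasures_eq (hρ : IsSublinearOp ρ)
    (hcont : ContFromAbove ρ) {A : Set Ω} (hA : MeasurableSet A) :
    ∃ μ ∈ dominatedMeasures ρ, μ A = ENNReal.ofReal (ρ (A.indicator 1)) := by
  obtain ⟨L, hL, hLρ, hLA⟩ := hρ.exists_isLinearOp_dominated_eq (memX_indicator_one hA)
  obtain ⟨μ, hμ⟩ := hLρ.exists_measure hL hρ hcont
  refine ⟨μ, fun B hB => ?_, by rw [hμ A hA, hLA]⟩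
  rw [hμ B hB]
  exact ENNReal.ofReal_le_ofReal (hLρ _ (memX_indicator_one hB))

lemma ContFromAbove.uniformlyExhaustive_dominatedMeasures (hcont : ContFromAbove ρ) :
    UniformlyExhaustive (dominatedMeasures ρ) := by
  intro μ E hμ hE hdisj
  let T n := ⋃ k ≥ n, E k
  have hT : ∀ n, MeasurableSet (T n) := fun n =>
    .biUnion (Set.to_countable _) fun k _ => hE k
  have hTanti : Antitone T := fun m n hmn =>
    Set.biUnion_subset_biUnion_left fun _ hk => le_trans hmn hk
  have hTempty : ⋂ n, T n = ∅ := by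
    refine Set.eq_empty_of_forall_notMem fun ω hω => ?_
    obtain ⟨k, -, hk⟩ := Set.mem_iUnion₂.1 (Set.mem_iInter.1 hω 0)
    obtain ⟨l, hkl, hl⟩ := Set.mem_iUnion₂.1 (Set.mem_iInter.1 hω (k + 1))
    exact Set.disjoint_left.1 (hdisj (Nat.lt_of_succ_le hkl).ne) hk hl
  have hlim := ENNReal.tendsto_ofReal (hcont.tendsto_indicator hT hTanti hTempty)
  rw [ENNReal.ofReal_zero] at hlim
  exact tendsto_of_tendsto_of_tendsto_of_le_of_le tendsto_const_nhds hlim (fun _ => zero_le)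
    fun n => (measure_mono (Set.subset_biUnion_of_mem (u := E) (le_refl n))).trans (hμ n _ (hT n))

lemma ControlledBy.of_absolutelyContinuous {κ : Measure Ω} (hκ : ControlledBy ρ κ) (hκν : κ ≪ ν) :
    ControlledBy ρ ν :=
  fun A hA hνA => hκ A hA (hκν hνA)

theorem IsSublinearOp.exists_isFiniteMeasure_controlledBy (hρ : IsSublinearOp ρ)
    (hcont : ContFromAbove ρ) : ∃ ν, IsFiniteMeasure ν ∧ ControlledBy ρ ν := by
  obtain ⟨ν, hν, hac⟩ := hcont.uniformlyExhaustive_dominatedMeasures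
    |>.exists_isFiniteMeasure_forall_absolutelyContinuous fun μ hμ =>
      have := isFiniteMeasure_of_mem_dominatedMeasures hμ
      inferInstance
  refine ⟨ν, hν, fun A hA hνA => ?_⟩
  obtain ⟨μ, hμ, hμA⟩ := hρ.exists_mem_dominatedMeasures_eq hcont hA
  rw [hac μ hμ hνA] at hμA
  exact (ENNReal.ofReal_eq_zero.1 hμA.symm).antisymm
    (hρ.nonneg (memX_indicator_one hA) (Set.indicator_nonneg fun _ _ => zero_le_one))

theorem exists_isFiniteMeasure_controlledBy_and_controlledBy {σ : (Ω → ℝ) → ℝ}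
    (hρ : IsSublinearOp ρ) (hσ : IsSublinearOp σ) (hcontρ : ContFromAbove ρ)
    (hcontσ : ContFromAbove σ) :
    ∃ ν, IsFiniteMeasure ν ∧ ControlledBy ρ ν ∧ ControlledBy σ ν := by
  obtain ⟨κ, hκ, hρκ⟩ := hρ.exists_isFiniteMeasure_controlledBy hcontρ
  obtain ⟨ν, hν, hσν⟩ := hσ.exists_isFiniteMeasure_controlledBy hcontσ
  exact ⟨κ + ν, inferInstance,
    hρκ.of_absolutelyContinuous (Measure.AbsolutelyContinuous.rfl.add_right ν),
    hσν.of_absolutelyContinuous (add_comm ν κ ▸ Measure.AbsolutelyContinuous.rfl.add_right κ)⟩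

theorem IsSublinearOp.tendsto_zero_of_forall_tendsto (hρ : IsSublinearOp ρ)
    (hcont : ContFromAbove ρ) {W : ℕ → Ω → ℝ} (hW : ∀ n, Measurable (W n))
    (hbdd : ∀ n ω, W n ω ∈ Set.Icc 0 C) (hlim : ∀ ω, Tendsto (fun n => W n ω) atTop (𝓝 0)) :
    Tendsto (fun n => ρ (W n)) atTop (𝓝 0) := by
  let Z : ℕ → Ω → ℝ := fun n ω => ⨆ k, W (n + k) ω
  have hWZ : ∀ {n m} ω, n ≤ m → W m ω ≤ Z n ω := fun {n m} ω hnm => by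
    obtain ⟨k, rfl⟩ := Nat.exists_eq_add_of_le hnm
    exact le_ciSup (f := fun k => W (n + k) ω)
      ⟨C, Set.forall_mem_range.2 fun k => (hbdd (n + k) ω).2⟩ k
  have hZ0 : ∀ n ω, 0 ≤ Z n ω := fun n ω => (hbdd n ω).1.trans (hWZ ω le_rfl)
  have hWX : ∀ n, MemX (W n) := fun n => memX_of_mem_Icc (hW n) (hbdd n)
  have hZX : ∀ n, MemX (Z n) := fun n => memX_of_mem_Icc (.iSup fun k => hW (n + k))
    fun ω => ⟨hZ0 n ω, ciSup_le fun k => (hbdd (n + k) ω).2⟩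
  have hZanti : ∀ ω, Antitone fun n => Z n ω := fun ω m n hmn =>
    ciSup_le fun k => hWZ ω (hmn.trans (Nat.le_add_right n k))
  have hZlim : ∀ ω, Tendsto (fun n => Z n ω) atTop (𝓝 0) := fun ω => by
    refine tendsto_order.2 ⟨fun a ha => .of_forall fun n => ha.trans_le (hZ0 n ω), fun b hb => ?_⟩
    obtain ⟨N, hN⟩ := eventually_atTop.1 ((hlim ω).eventually_le_const (half_pos hb))
    filter_upwards [eventually_ge_atTop N] with n hn
    exact (ciSup_le fun k => hN _ (hn.trans (Nat.le_add_right n k))).trans_lt (half_lt_self hb)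
  exact squeeze_zero (fun n => hρ.nonneg (hWX n) fun ω => (hbdd n ω).1)
    (fun n => hρ.mono (hWX n) (hZX n) fun ω => hWZ ω le_rfl) (hcont Z hZX hZanti hZlim)

lemma IsSublinearOp.tendsto_zero_of_tendsto_ae (hρ : IsSublinearOp ρ) (hcont : ContFromAbove ρ)
    (hν : ControlledBy ρ ν) {W : ℕ → Ω → ℝ} (hW : ∀ n, Measurable (W n))
    (hbdd : ∀ n ω, W n ω ∈ Set.Icc 0 C)
    (hlim : ∀ᵐ ω ∂ν, Tendsto (fun n => W n ω) atTop (𝓝 0)) :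
    Tendsto (fun n => ρ (W n)) atTop (𝓝 0) := by
  obtain ⟨N, hsub, hN, hνN⟩ := exists_measurable_superset_of_null (ae_iff.1 hlim)
  have hWX : ∀ n, MemX (W n) := fun n => memX_of_mem_Icc (hW n) (hbdd n)
  have hoff : Tendsto (fun n => ρ (Nᶜ.indicator (W n))) atTop (𝓝 0) := by
    refine hρ.tendsto_zero_of_forall_tendsto (C := C) hcont
      (fun n => (hW n).indicator hN.compl) (fun n ω => ?_) fun ω => ?_
    · exact ⟨Set.indicator_nonneg (fun ω _ => (hbdd n ω).1) ω,
        (Set.indicator_le_self' (fun _ _ => (hbdd n _).1) ω).trans (hbdd n ω).2⟩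
    · by_cases hω : ω ∈ N
      · simp only [Set.indicator_of_notMem (Set.notMem_compl_iff.2 hω), tendsto_const_nhds]
      · simpa only [Set.indicator_of_mem (Set.mem_compl hω)] using not_not.1 (mt (@hsub ω) hω)
  have hon : ∀ n, ρ (N.indicator (W n)) ≤ 0 := fun n => by
    have hind := memX_indicator_one hN
    calc ρ (N.indicator (W n)) ≤ ρ (|C| • N.indicator 1) := by
          refine hρ.mono ((hWX n).indicator hN) (hind.const_smul _) fun ω => ?_
          rw [Pi.smul_apply, ← Set.indicator_const_smul_apply]
          refine Set.indicator_le_indicator ?_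
          simpa only [Pi.one_apply, smul_eq_mul, mul_one] using (hbdd n ω).2.trans (le_abs_self C)
      _ = 0 := by rw [hρ.2.2.2 _ (abs_nonneg C) _ hind, hν N hN hνN, mul_zero]
  refine squeeze_zero (fun n => hρ.nonneg (hWX n) fun ω => (hbdd n ω).1) (fun n => ?_) hoff
  have hadd := hρ.2.2.1 _ _ ((hWX n).indicator hN) ((hWX n).indicator hN.compl)
  rw [Set.indicator_self_add_compl] at hadd
  linarith [hon n]

theorem IsSublinearOp.tendsto_of_tendsto_ae (hρ : IsSublinearOp ρ) (hcont : ContFromAbove ρ)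
    (hν : ControlledBy ρ ν) {X : ℕ → Ω → ℝ} {Y : Ω → ℝ} (hX : ∀ n, Measurable (X n))
    (hbdd : ∀ n ω, |X n ω| ≤ C) (hY : MemX Y)
    (hlim : ∀ᵐ ω ∂ν, Tendsto (fun n => X n ω) atTop (𝓝 (Y ω))) :
    Tendsto (fun n => ρ (X n)) atTop (𝓝 (ρ Y)) := by
  obtain ⟨hYm, D, hD⟩ := id hY
  have hdiff : Tendsto (fun n => ρ |X n - Y|) atTop (𝓝 0) := by
    refine hρ.tendsto_zero_of_tendsto_ae hcont hν (C := C + D) (fun n => ((hX n).sub hYm).norm)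
      (fun n ω => ⟨abs_nonneg _, (abs_sub _ _).trans (add_le_add (hbdd n ω) (hD ω))⟩) ?_
    filter_upwards [hlim] with ω hω
    simpa only [sub_self, abs_zero, Pi.abs_apply, Pi.sub_apply] using (hω.sub_const (Y ω)).abs
  exact tendsto_iff_dist_tendsto_zero.2 <| squeeze_zero (fun _ => dist_nonneg)
    (fun n => hρ.abs_sub_le ⟨hX n, C, hbdd n⟩ hY) hdiff

lemma IsSublinearOp.tendsto_conjOp_of_tendsto_ae (hρ : IsSublinearOp ρ) (hcont : ContFromAbove ρ)
    (hν : ControlledBy ρ ν) {X : ℕ → Ω → ℝ} {Y : Ω → ℝ} (hX : ∀ n, Measurable (X n))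
    (hbdd : ∀ n ω, |X n ω| ≤ C) (hY : MemX Y)
    (hlim : ∀ᵐ ω ∂ν, Tendsto (fun n => X n ω) atTop (𝓝 (Y ω))) :
    Tendsto (fun n => conjOp ρ (X n)) atTop (𝓝 (conjOp ρ Y)) :=
  (hρ.tendsto_of_tendsto_ae hcont hν (fun n => (hX n).neg)
    (fun n ω => (abs_neg _).trans_le (hbdd n ω)) hY.neg (hlim.mono fun _ hω => hω.neg)).neg

lemma abs_le_one_of_mem_testSet {α : ℝ} {X : Ω → ℝ} (hX : X ∈ testSet ρ α) (ω : Ω) : |X ω| ≤ 1 :=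
  (abs_of_nonneg (hX.2.1 ω).1).trans_le (hX.2.1 ω).2

lemma IsSublinearOp.mem_testSet_of_tendsto_ae (hρ : IsSublinearOp ρ) (hcont : ContFromAbove ρ)
    (hν : ControlledBy ρ ν) {α : ℝ} {X : ℕ → Ω → ℝ} {Y : Ω → ℝ} (hX : ∀ n, X n ∈ testSet ρ α)
    (hY : Measurable Y) (hYb : ∀ ω, Y ω ∈ Set.Icc 0 1)
    (hlim : ∀ᵐ ω ∂ν, Tendsto (fun n => X n ω) atTop (𝓝 (Y ω))) : Y ∈ testSet ρ α := by
  have hYX : MemX Y := memX_of_mem_Icc hY hYb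
  exact ⟨hYX, hYb, le_of_tendsto' (hρ.tendsto_of_tendsto_ae hcont hν (fun n => (hX n).1.1)
    (fun n => abs_le_one_of_mem_testSet (hX n)) hYX hlim) fun n => (hX n).2.2⟩

end Control

/-- If `E_μ` and `E_υ` are both continuous from above on `𝒳`, then Problem 2.1
admits an optimal solution. -/
theorem exists_optimal_solution {Ω : Type*} [MeasurableSpace Ω]
    (Emu Eups : (Ω → ℝ) → ℝ)
    (hEmu : IsSublinearOp Emu) (hEups : IsSublinearOp Eups)
    (α : ℝ) (hα0 : 0 < α) (hα1 : α < 1)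
    (hcontmu : ContFromAbove Emu) (hcontups : ContFromAbove Eups) :
    ∃ Xa ∈ testSet Emu α,
      conjOp Eups Xa = sSup (conjOp Eups '' testSet Emu α) := by
  obtain ⟨ν, hν, hEmuν, hEupsν⟩ :=
    exists_isFiniteMeasure_controlledBy_and_controlledBy hEmu hEups hcontmu hcontups
  have hconcave : ConcaveOn ℝ (testSet Emu α) (conjOp Eups) :=
    hEups.concaveOn_conjOp.subset (fun _ hX => hX.1) (hEmu.convex_testSet α)
  have hzero : 0 ∈ testSet Emu α :=
    ⟨memX_const 0, fun _ => ⟨le_rfl, zero_le_one⟩, hEmu.map_zero.trans_le hα0.le⟩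
  obtain ⟨Xa, hXa, hmax⟩ := exists_isMaxOn_of_quasiconcaveOn (f := 0) (g := 1) (ν := ν)
    (memLp_const 0) (memLp_const 1) ⟨0, hzero⟩ (fun X hX => hX.1.1)
    (fun X hX => ⟨fun ω => (hX.2.1 ω).1, fun ω => (hX.2.1 ω).2⟩) hconcave.quasiconcaveOn
    fun c Y Z hY hZ hZ01 hYZ => by
      have hZmem : Z ∈ testSet Emu α := hEmu.mem_testSet_of_tendsto_ae hcontmu hEmuν
        (fun n => (hY n).1) hZ (fun ω => ⟨hZ01.1 ω, hZ01.2 ω⟩) hYZ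
      exact ⟨hZmem, ge_of_tendsto' (hEups.tendsto_conjOp_of_tendsto_ae hcontups hEupsν
        (fun n => (hY n).1.1.1) (fun n => abs_le_one_of_mem_testSet (hY n).1) hZmem.1 hYZ)
        fun n => (hY n).2⟩
  have hgreatest : IsGreatest (conjOp Eups '' testSet Emu α) (conjOp Eups Xa) :=
    ⟨Set.mem_image_of_mem _ hXa, Set.forall_mem_image.2 hmax⟩
  exact ⟨Xa, hXa, hgreatest.csSup_eq.symm⟩
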